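/- arXiv:1112.2719 — 3 statements merged into one kernel-verified Lean document; each statement's English description precedes it below -/
import Mathlib

section
/- Fix an integer r ≥ 3. For every admissible triple (i,j,k), all the quantum factorials appearing in the defining expression of θ(i,j,k) (namely Δ_{x+y+z}!, Δ_{x−1}!, Δ_{y−1}!, Δ_{z−1}!, Δ_{y+z−1}!, Δ_{x+z−1}!, Δ_{x+y−1}! where x = (j+k−i)/2, y = (i+k−j)/2, z = (i+j−k)/2) are nonzero, and θ(i,j,k) ≠ 0. -/
/-- The variable `A = exp(πi/(2r))`. -/
noncomputable def A (r : ℕ) : ℂ := Complex.exp (Real.pi * Complex.I / (2 * r))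

/-- The quantum dimension `Δ_n = (−1)^n (A^{2(n+1)} − A^{−2(n+1)})/(A^2 − A^{−2})`. -/
noncomputable def Δ (r : ℕ) (n : ℕ) : ℂ :=
  (-1) ^ n * (A r ^ (2 * ((n : ℤ) + 1)) - A r ^ (-(2 * ((n : ℤ) + 1)))) /
    (A r ^ (2 : ℤ) - A r ^ (-2 : ℤ))

/-- Shifted quantum factorial: `qfact r n = Δ_{n−1}! = Δ_{n−1} · Δ_{n−2} ⋯ Δ_0`,
so `qfact r 0 = Δ_{−1}! = 1` and `qfact r (n+1) = Δ_n!`. -/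
noncomputable def qfact (r : ℕ) : ℕ → ℂ
  | 0 => 1
  | n + 1 => Δ r n * qfact r n

/-- A triple `(i,j,k)` of colors in `I = {0,…,r−2}` is *admissible* if
`i ≤ j+k`, `j ≤ i+k`, `k ≤ i+j`, `i+j+k` is even, and `i+j+k ≤ 2(r−2)`. -/
def Admissible (r i j k : ℕ) : Prop :=
  i ≤ r - 2 ∧ j ≤ r - 2 ∧ k ≤ r - 2 ∧
  i ≤ j + k ∧ j ≤ i + k ∧ k ≤ i + j ∧ 2 ∣ (i + j + k) ∧ i + j + k ≤ 2 * (r - 2)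

/-- `θ(i,j,k) = Δ_{x+y+z}! Δ_{x−1}! Δ_{y−1}! Δ_{z−1}! / (Δ_{y+z−1}! Δ_{x+z−1}! Δ_{x+y−1}!)`
where `x = (j+k−i)/2`, `y = (i+k−j)/2`, `z = (i+j−k)/2`. -/
noncomputable def theta (r i j k : ℕ) : ℂ :=
  let x := (j + k - i) / 2
  let y := (i + k - j) / 2
  let z := (i + j - k) / 2
  qfact r (x + y + z + 1) * qfact r x * qfact r y * qfact r z /
    (qfact r (y + z) * qfact r (x + z) * qfact r (x + y))

/- The number `A` is a primitive `4r`-th root of unity, so `Δ_n` vanishes exactly when `r ∣ n + 1`.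
Hence `Δ_{n−1}!` is nonzero exactly for `n < r`, and admissibility of `(i,j,k)` ensures that
the largest factorial in `θ(i,j,k)`, namely `Δ_{x+y+z}!` with `x + y + z = (i+j+k)/2 ≤ r − 2`, stays
in this range. -/

theorem zpow_eq_zpow_neg_iff {G₀ : Type*} [GroupWithZero G₀] {a : G₀} (ha : a ≠ 0) (m : ℤ) :
    a ^ m = a ^ (-m) ↔ a ^ (2 * m) = 1 := by
  rw [zpow_neg, ← mul_eq_one_iff_eq_inv₀ (zpow_ne_zero m ha), ← zpow_add₀ ha, ← two_mul]

theorem isPrimitiveRoot_A {r : ℕ} (hr : r ≠ 0) : IsPrimitiveRoot (A r) (4 * r) := by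
  have hA : A r = Complex.exp (2 * Real.pi * Complex.I / (4 * r : ℕ)) := by
    rw [A]
    congr 1
    push_cast
    field_simp
    norm_num
  rw [hA]
  exact Complex.isPrimitiveRoot_exp (4 * r) (by positivity)

theorem A_zpow_sub_zpow_neg_eq_zero_iff {r : ℕ} (hr : r ≠ 0) (m : ℤ) :
    A r ^ (2 * m) - A r ^ (-(2 * m)) = 0 ↔ (r : ℤ) ∣ m := by
  have hA : A r ≠ 0 := Complex.exp_ne_zero _
  calc A r ^ (2 * m) - A r ^ (-(2 * m)) = 0
      ↔ A r ^ (2 * (2 * m)) = 1 := by rw [sub_eq_zero, zpow_eq_zpow_neg_iff hA]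
    _ ↔ ((4 * r : ℕ) : ℤ) ∣ 2 * (2 * m) := (isPrimitiveRoot_A hr).zpow_eq_one_iff_dvd _
    _ ↔ 4 * (r : ℤ) ∣ 4 * m := by push_cast; ring_nf
    _ ↔ (r : ℤ) ∣ m := mul_dvd_mul_iff_left (by norm_num)

/- For `r = 1` the denominator of `Δ` is zero, and the left-hand side holds because `x / 0 = 0`. -/
theorem Δ_eq_zero_iff {r : ℕ} (hr : r ≠ 0) (n : ℕ) : Δ r n = 0 ↔ r ∣ n + 1 := by
  have hnum := A_zpow_sub_zpow_neg_eq_zero_iff hr (n + 1)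
  have hden : A r ^ (2 : ℤ) - A r ^ (-2 : ℤ) = 0 ↔ (r : ℤ) ∣ 1 :=
    A_zpow_sub_zpow_neg_eq_zero_iff hr 1
  have hsign : (-1 : ℂ) ^ n ≠ 0 := pow_ne_zero n (by norm_num)
  rw [Δ, div_eq_zero_iff, mul_eq_zero_iff_left hsign, hnum, hden]
  norm_cast
  exact or_iff_left_of_imp fun h => h.trans (one_dvd _)

theorem qfact_ne_zero_iff {r : ℕ} (hr : r ≠ 0) (n : ℕ) : qfact r n ≠ 0 ↔ n < r := by
  induction n with
  | zero => simp [qfact, Nat.pos_of_ne_zero hr]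
  | succ n ih =>
    rw [qfact, mul_ne_zero_iff, ih, Ne, Δ_eq_zero_iff hr]
    constructor
    · rintro ⟨hndvd, hlt⟩
      exact lt_of_le_of_ne hlt fun h => hndvd h.symm.dvd
    · intro hlt
      exact ⟨Nat.not_dvd_of_pos_of_lt n.succ_pos hlt, (Nat.lt_succ_self n).trans hlt⟩

theorem Admissible.half_sum_add_one_lt {r i j k : ℕ} (hr : 2 ≤ r)
    (h : Admissible r i j k) :
    (j + k - i) / 2 + (i + k - j) / 2 + (i + j - k) / 2 + 1 < r := by
  obtain ⟨-, -, -, hi, hj, hk, heven, hsum⟩ := h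
  omega

/-- for every admissible triple `(i,j,k)` all the quantum factorials
`Δ_{x+y+z}!, Δ_{x−1}!, Δ_{y−1}!, Δ_{z−1}!, Δ_{y+z−1}!, Δ_{x+z−1}!, Δ_{x+y−1}!` appearing
in the definition of `θ(i,j,k)` are nonzero, and `θ(i,j,k) ≠ 0`. -/
theorem theta_ne_zero (r : ℕ) (hr : 3 ≤ r) (i j k : ℕ) (hadm : Admissible r i j k) :
    qfact r ((j + k - i) / 2 + (i + k - j) / 2 + (i + j - k) / 2 + 1) ≠ 0 ∧
    qfact r ((j + k - i) / 2) ≠ 0 ∧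
    qfact r ((i + k - j) / 2) ≠ 0 ∧
    qfact r ((i + j - k) / 2) ≠ 0 ∧
    qfact r ((i + k - j) / 2 + (i + j - k) / 2) ≠ 0 ∧
    qfact r ((j + k - i) / 2 + (i + j - k) / 2) ≠ 0 ∧
    qfact r ((j + k - i) / 2 + (i + k - j) / 2) ≠ 0 ∧
    theta r i j k ≠ 0 := by
  have hlt := hadm.half_sum_add_one_lt (by omega)
  unfold theta
  generalize (j + k - i) / 2 = x, (i + k - j) / 2 = y, (i + j - k) / 2 = z at hlt ⊢
  have hq {m : ℕ} (hm : m ≤ x + y + z + 1) : qfact r m ≠ 0 :=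
    (qfact_ne_zero_iff (by omega) m).2 (hm.trans_lt hlt)
  have hxyz := hq le_rfl
  have hx : qfact r x ≠ 0 := hq (by omega)
  have hy : qfact r y ≠ 0 := hq (by omega)
  have hz : qfact r z ≠ 0 := hq (by omega)
  have hyz : qfact r (y + z) ≠ 0 := hq (by omega)
  have hxz : qfact r (x + z) ≠ 0 := hq (by omega)
  have hxy : qfact r (x + y) ≠ 0 := hq (by omega)
  have hnum := mul_ne_zero (mul_ne_zero (mul_ne_zero hxyz hx) hy) hz
  have hden := mul_ne_zero (mul_ne_zero hyz hxz) hxy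
  exact ⟨hxyz, hx, hy, hz, hyz, hxz, hxy, div_ne_zero hnum hden⟩
end

section
/- Fix an integer r ≥ 3 and let A = exp(πi/(2r)). Then N := Σ_{n=0}^{r−2} Δ_n^2 equals r/(2·sin^2(π/r)). -/
/-!
Put `ζ = A ^ 4`, a primitive `r`-th root of unity. Squaring removes the sign in `Δ_n`, and
`(A ^ 2 - A ^ (-2)) ^ 2 * Δ_n ^ 2 = ζ ^ (n + 1) + ζ⁻¹ ^ (n + 1) - 2`. The nontrivial powers of `ζ`
add up to `-1`, and so do those of `ζ⁻¹`, so the sum over `n < r - 1` of the right-hand side is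
`-1 - 1 - 2 * (r - 1) = -2 * r`. For `A = exp (π * I / (2 * r))` the factor
`(A ^ 2 - A ^ (-2)) ^ 2` equals `-4 * sin (π / r) ^ 2`.
-/

open Finset

section QuantumDimension

variable {K : Type*} [Field K]

/-- The quantum dimension `Δ_n` at an arbitrary Kauffman bracket variable `a` in a field, the value
of the closure of the Jones–Wenzl idempotent `JW_n`. It takes the junk value `0` when `a = 0` or
`a ^ 4 = 1`, where the denominator vanishes. -/
def quantumDim (a : K) (n : ℕ) : K :=
  (-1) ^ n * (a ^ (2 * ((n : ℤ) + 1)) - a ^ (-(2 * ((n : ℤ) + 1)))) / (a ^ (2 : ℤ) - a ^ (-2 : ℤ))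

theorem quantumDim_sq {a : K} (ha : a ≠ 0) (n : ℕ) :
    quantumDim a n ^ 2 =
      ((a ^ 4) ^ (n + 1) + (a ^ 4)⁻¹ ^ (n + 1) - 2) / (a ^ (2 : ℤ) - a ^ (-2 : ℤ)) ^ 2 := by
  have sign_sq : ((-1 : K) ^ n) ^ 2 = 1 := by rw [pow_right_comm, neg_one_sq, one_pow]
  have zpow_eq_pow : a ^ (2 * ((n : ℤ) + 1)) = a ^ (2 * (n + 1)) := by
    exact_mod_cast zpow_natCast a (2 * (n + 1))
  have pow_sq : (a ^ 4) ^ (n + 1) = (a ^ (2 * (n + 1))) ^ 2 := by ring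
  rw [quantumDim, div_pow, mul_pow, sign_sq, one_mul, zpow_neg, zpow_eq_pow, inv_pow, pow_sq,
    sub_sq, mul_assoc, mul_inv_cancel₀ (pow_ne_zero _ ha)]
  ring

theorem sum_pow_succ_eq_neg_one_of_isPrimitiveRoot {R : Type*} [CommRing R] [IsDomain R] {ζ : R}
    {r : ℕ} (hζ : IsPrimitiveRoot ζ r) (hr : 1 < r) :
    ∑ n ∈ range (r - 1), ζ ^ (n + 1) = -1 := by
  have geom_sum := hζ.geom_sum_eq_zero hr
  rw [← Nat.sub_add_cancel hr.le, sum_range_succ', pow_zero] at geom_sum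
  exact eq_neg_of_add_eq_zero_left geom_sum

theorem omega_circle_value_general {a : K} {r : ℕ} (ha : IsPrimitiveRoot (a ^ 4) r) (hr : 1 < r) :
    ∑ n ∈ range (r - 1), quantumDim a n ^ 2 = -2 * r / (a ^ (2 : ℤ) - a ^ (-2 : ℤ)) ^ 2 := by
  have ha₀ : a ≠ 0 := (pow_ne_zero_iff four_ne_zero).1 (ha.ne_zero (by lia))
  simp only [quantumDim_sq ha₀]
  rw [← sum_div, sum_sub_distrib, sum_add_distrib,
    sum_pow_succ_eq_neg_one_of_isPrimitiveRoot ha hr,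
    sum_pow_succ_eq_neg_one_of_isPrimitiveRoot ha.inv hr, sum_const, card_range, nsmul_eq_mul,
    Nat.cast_pred (by lia)]
  ring

end QuantumDimension

theorem Δ_eq_quantumDim (r n : ℕ) : Δ r n = quantumDim (A r) n := rfl

theorem isPrimitiveRoot_A_pow_four {r : ℕ} (hr : r ≠ 0) : IsPrimitiveRoot (A r ^ 4) r := by
  have A_pow_four : A r ^ 4 = Complex.exp (2 * Real.pi * Complex.I / r) := by
    rw [A, ← Complex.exp_nat_mul]
    congr 1
    push_cast
    ring
  exact A_pow_four ▸ Complex.isPrimitiveRoot_exp r hr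

theorem A_zpow_two_sub_A_zpow_neg_two (r : ℕ) :
    A r ^ (2 : ℤ) - A r ^ (-2 : ℤ) = 2 * Complex.I * (Real.sin (Real.pi / r) : ℂ) := by
  have A_zpow_two : A r ^ (2 : ℤ) = Complex.exp ((Real.pi / r : ℝ) * Complex.I) := by
    rw [A, ← Complex.exp_int_mul]
    congr 1
    push_cast
    ring
  rw [zpow_neg, A_zpow_two, ← Complex.exp_neg, ← neg_mul, Complex.ofReal_sin, mul_right_comm,
    Complex.two_sin, mul_assoc, Complex.I_mul_I]
  ring

theorem A_zpow_two_sub_A_zpow_neg_two_sq (r : ℕ) :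
    (A r ^ (2 : ℤ) - A r ^ (-2 : ℤ)) ^ 2 = -4 * (Real.sin (Real.pi / r) : ℂ) ^ 2 := by
  rw [A_zpow_two_sub_A_zpow_neg_two, mul_pow, mul_pow, Complex.I_sq]
  ring

/-- for r ≥ 3, `N = Σ_{n=0}^{r−2} Δ_n² = r/(2 sin²(π/r))`. -/
theorem omega_circle_value (r : ℕ) (hr : 3 ≤ r) :
    ∑ n ∈ Finset.range (r - 1), (Δ r n) ^ 2 =
      (r : ℂ) / (2 * (Real.sin (Real.pi / r) : ℂ) ^ 2) := by
  simp only [Δ_eq_quantumDim]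
  rw [omega_circle_value_general (isPrimitiveRoot_A_pow_four (by lia)) (by lia),
    A_zpow_two_sub_A_zpow_neg_two_sq]
  ring
end

section
/- Fix an integer r ≥ 3 and let A = exp(πi/(2r)). Then the sum of Δ_i · Δ_j · Δ_k over all admissible triples (i,j,k) ∈ I^3 equals r^2/(4·sin^4(π/r)). (This is the value of the quantum invariant ⟨·⟩_H of the trivial genus-2 handlebody-knot, computed from a theta-curve diagram.) -/
instance (r i j k : ℕ) : Decidable (Admissible r i j k) := by
  unfold Admissible; infer_instance

/-! Put `q = -A²`, so that `Δ_n` is the quantum integer `[n + 1]` at `q`, without any sign. At a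
`2r`-th root of unity `[r - m] [r - n] = [m] [n]`, and this turns the quantum Clebsch–Gordan formula
into the fusion rule `[i + 1] [j + 1] = ∑ₖ [k + 1]`, where `k` runs over the colors with `(i, j, k)`
admissible. Summing over `k` first therefore leaves `(∑ᵢ [i + 1]²)²`, and `∑ᵢ [i + 1]²` is
evaluated by two geometric sums that vanish. -/

theorem admissible_comm {r i j k : ℕ} : Admissible r i j k ↔ Admissible r j i k := by
  unfold Admissible
  lia

section QuantumInteger

open Finset

variable {K : Type*} [Field K] {q : K}

/-- The quantum integer `[n] = (q ^ n - q ^ (-n)) / (q - q⁻¹)`, meaningful when `q ≠ q⁻¹`. It is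
indexed by `ℤ` so that the reflection `n ↦ r - n` involves no truncated subtraction. -/
def quantumInt (q : K) (n : ℤ) : K :=
  (q ^ n - q ^ (-n)) / (q - q⁻¹)

@[simp]
theorem quantumInt_zero (q : K) : quantumInt q 0 = 0 := by
  simp [quantumInt]

theorem ne_zero_of_ne_inv (hq : q ≠ q⁻¹) : q ≠ 0 := by
  rintro rfl
  simp at hq

theorem quantumInt_succ_mul_quantumInt (hq : q ≠ q⁻¹) (m n : ℤ) :
    quantumInt q (n + 1) * quantumInt q (m + n) =
      quantumInt q n * quantumInt q (m + n - 1) + quantumInt q (m + 2 * n) := by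
  have hq₀ := ne_zero_of_ne_inv hq
  have hd : q - q⁻¹ ≠ 0 := sub_ne_zero.2 hq
  unfold quantumInt
  rw [div_mul_div_comm, div_mul_div_comm, ← mul_div_mul_right (_ - _) _ hd, ← add_div]
  congr 1
  simp only [two_mul, neg_sub, neg_add, zpow_add₀ hq₀, zpow_sub₀ hq₀, zpow_neg, zpow_one]
  field_simp
  ring

theorem sum_range_quantumInt_add_two_mul (hq : q ≠ q⁻¹) (m : ℤ) (n : ℕ) :
    ∑ t ∈ range n, quantumInt q (m + 2 * t) = quantumInt q n * quantumInt q (m + n - 1) := by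
  induction n with
  | zero => simp
  | succ n ih =>
    rw [sum_range_succ, ih, ← quantumInt_succ_mul_quantumInt hq]
    push_cast
    ring_nf

theorem quantumInt_sub_of_pow_eq_one (hq₀ : q ≠ 0) {r : ℕ} (hqr : q ^ (2 * r) = 1) (n : ℤ) :
    quantumInt q (r - n) = -q ^ r * quantumInt q n := by
  have hinv : (q ^ r)⁻¹ = q ^ r := inv_eq_of_mul_eq_one_left (by rw [← pow_add, ← two_mul, hqr])
  simp only [quantumInt, neg_sub, zpow_sub₀ hq₀, zpow_neg, zpow_natCast, div_eq_mul_inv, hinv]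
  ring

theorem quantumInt_sub_mul_quantumInt_sub (hq₀ : q ≠ 0) {r : ℕ} (hqr : q ^ (2 * r) = 1)
    (m n : ℤ) :
    quantumInt q (r - m) * quantumInt q (r - n) = quantumInt q m * quantumInt q n := by
  rw [quantumInt_sub_of_pow_eq_one hq₀ hqr, quantumInt_sub_of_pow_eq_one hq₀ hqr]
  linear_combination quantumInt q m * quantumInt q n * hqr

theorem filter_admissible_eq_image {r i j : ℕ} (hi : i < r - 1) (hji : j ≤ i) :
    {k ∈ range (r - 1) | Admissible r i j k} =
      (range (min (j + 1) (r - 1 - i))).image fun t => i - j + 2 * t := by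
  ext k
  rw [mem_filter]
  simp only [mem_image, mem_range, Admissible]
  constructor
  · intro h
    exact ⟨(k - (i - j)) / 2, by lia, by lia⟩
  · rintro ⟨t, ht, rfl⟩
    omega

theorem sum_quantumInt_admissible_of_le (hq : q ≠ q⁻¹) {r i j : ℕ} (hqr : q ^ (2 * r) = 1)
    (hi : i < r - 1) (hji : j ≤ i) :
    ∑ k ∈ range (r - 1) with Admissible r i j k, quantumInt q (k + 1) =
      quantumInt q (i + 1) * quantumInt q (j + 1) := by
  have hsum (n : ℕ) : ∑ t ∈ range n, quantumInt q ((i - j + 2 * t : ℕ) + 1) =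
      quantumInt q n * quantumInt q (i - j + n) := by
    convert sum_range_quantumInt_add_two_mul hq (i - j + 1) n using 3
    · lia
    · ring
  rw [filter_admissible_eq_image hi hji, sum_image (fun _ _ _ _ _ => by lia), hsum]
  rcases le_total (j + 1) (r - 1 - i) with h | h
  · rw [min_eq_left h, mul_comm]
    congr 2
    lia
  · rw [min_eq_right h, ← quantumInt_sub_mul_quantumInt_sub (ne_zero_of_ne_inv hq) hqr]
    congr 2 <;> lia

theorem sum_quantumInt_admissible (hq : q ≠ q⁻¹) {r i j : ℕ} (hqr : q ^ (2 * r) = 1)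
    (hi : i < r - 1) (hj : j < r - 1) :
    ∑ k ∈ range (r - 1) with Admissible r i j k, quantumInt q (k + 1) =
      quantumInt q (i + 1) * quantumInt q (j + 1) := by
  rcases le_total j i with h | h
  · exact sum_quantumInt_admissible_of_le hq hqr hi h
  · simp only [admissible_comm (i := i)]
    rw [mul_comm, sum_quantumInt_admissible_of_le hq hqr hj h]

theorem geom_sum_eq_zero_of_pow_eq_one {x : K} (hx : x ≠ 1) {n : ℕ} (hxn : x ^ n = 1) :
    ∑ i ∈ range n, x ^ i = 0 := by
  rw [geom_sum_eq hx, hxn, sub_self, zero_div]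

theorem sum_range_quantumInt_sq (hq : q ≠ q⁻¹) {r : ℕ} (hqr : q ^ (2 * r) = 1) :
    ∑ n ∈ range r, quantumInt q n ^ 2 = -(2 * r) / (q - q⁻¹) ^ 2 := by
  have hq₀ := ne_zero_of_ne_inv hq
  have hq₂ : q ^ 2 ≠ 1 := fun h => hq (eq_inv_of_mul_eq_one_left (by rw [← sq, h]))
  have hpos : ∑ n ∈ range r, (q ^ 2) ^ n = 0 :=
    geom_sum_eq_zero_of_pow_eq_one hq₂ (by rw [← pow_mul, hqr])
  have hneg : ∑ n ∈ range r, (q ^ 2)⁻¹ ^ n = 0 :=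
    geom_sum_eq_zero_of_pow_eq_one (inv_ne_one.2 hq₂) (by rw [inv_pow, ← pow_mul, hqr, inv_one])
  have hterm (n : ℕ) :
      quantumInt q n ^ 2 = ((q ^ 2) ^ n + (q ^ 2)⁻¹ ^ n - 2) / (q - q⁻¹) ^ 2 := by
    rw [quantumInt, div_pow, zpow_neg, zpow_natCast, inv_pow, pow_right_comm]
    congr 1
    field_simp
    ring
  simp only [hterm, ← sum_div, sum_sub_distrib, sum_add_distrib, hpos, hneg, sum_const, card_range,
    nsmul_eq_mul]
  ring

theorem sum_range_quantumInt_succ_sq (hq : q ≠ q⁻¹) {r : ℕ} (hqr : q ^ (2 * r) = 1) :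
    ∑ n ∈ range (r - 1), quantumInt q (n + 1) ^ 2 = -(2 * r) / (q - q⁻¹) ^ 2 := by
  rw [← sum_range_quantumInt_sq hq hqr]
  cases r with
  | zero => simp
  | succ r => simp [sum_range_succ']

theorem trivial_genus_two_invariant_general (hq : q ≠ q⁻¹) {r : ℕ} (hqr : q ^ (2 * r) = 1) :
    ∑ p ∈ range (r - 1) ×ˢ range (r - 1) ×ˢ range (r - 1) with Admissible r p.1 p.2.1 p.2.2,
      quantumInt q (p.1 + 1) * quantumInt q (p.2.1 + 1) * quantumInt q (p.2.2 + 1) =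
    4 * (r : K) ^ 2 / (q - q⁻¹) ^ 4 := by
  calc
    _ = ∑ i ∈ range (r - 1), ∑ j ∈ range (r - 1), quantumInt q (i + 1) * quantumInt q (j + 1) *
          ∑ k ∈ range (r - 1) with Admissible r i j k, quantumInt q (k + 1) := by
      simp only [sum_filter, sum_product, mul_sum, mul_ite, mul_zero]
    _ = ∑ i ∈ range (r - 1), ∑ j ∈ range (r - 1),
          quantumInt q (i + 1) ^ 2 * quantumInt q (j + 1) ^ 2 := by
      refine sum_congr rfl fun i hi => sum_congr rfl fun j hj => ?_
      rw [sum_quantumInt_admissible hq hqr (mem_range.1 hi) (mem_range.1 hj), ← sq, mul_pow]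
    _ = (∑ i ∈ range (r - 1), quantumInt q (i + 1) ^ 2) ^ 2 := by
      rw [← sum_mul_sum, ← sq]
    _ = 4 * (r : K) ^ 2 / (q - q⁻¹) ^ 4 := by
      rw [sum_range_quantumInt_succ_sq hq hqr, div_pow, ← pow_mul]
      ring

end QuantumInteger

theorem neg_A_sq_zpow_sub_zpow_neg (r : ℕ) (m : ℤ) :
    (-A r ^ 2) ^ m - (-A r ^ 2) ^ (-m) = (-1) ^ m * (A r ^ (2 * m) - A r ^ (-(2 * m))) := by
  have hpow (l : ℤ) : (-A r ^ 2) ^ l = (-1) ^ l * A r ^ (2 * l) := by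
    rw [neg_eq_neg_one_mul, mul_zpow, zpow_mul, zpow_ofNat]
  rw [hpow, hpow, zpow_neg (-1 : ℂ), ← inv_zpow, inv_neg_one, mul_neg, mul_sub]

theorem Δ_eq_quantumInt (r n : ℕ) : Δ r n = quantumInt (-A r ^ 2) (n + 1) := by
  have hden : -A r ^ 2 - (-A r ^ 2)⁻¹ = -(A r ^ (2 : ℤ) - A r ^ (-2 : ℤ)) := by
    simpa using neg_A_sq_zpow_sub_zpow_neg r 1
  rw [Δ, quantumInt, neg_A_sq_zpow_sub_zpow_neg, hden, div_neg, ← neg_div, ← Int.natCast_succ,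
    zpow_natCast, pow_succ]
  push_cast
  ring

theorem A_sq (r : ℕ) : A r ^ 2 = Complex.exp ((Real.pi / r : ℝ) * Complex.I) := by
  rw [A, ← Complex.exp_nat_mul]
  congr 1
  push_cast
  ring

theorem neg_A_sq_pow_two_mul {r : ℕ} (hr : r ≠ 0) : (-A r ^ 2) ^ (2 * r) = 1 := by
  rw [(even_two_mul r).neg_pow, A_sq, ← Complex.exp_nat_mul, ← Complex.exp_two_pi_mul_I]
  congr 1
  push_cast
  field_simp

theorem neg_A_sq_sub_inv (r : ℕ) :
    -A r ^ 2 - (-A r ^ 2)⁻¹ = -(2 * Complex.I * Real.sin (Real.pi / r)) := by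
  rw [A_sq, inv_neg, ← Complex.exp_neg, ← neg_mul, Complex.ofReal_sin, Complex.sin]
  linear_combination
    (Complex.exp (-(Real.pi / r : ℝ) * Complex.I) - Complex.exp ((Real.pi / r : ℝ) * Complex.I)) *
      Complex.I_sq

theorem sin_pi_div_nat_pos {r : ℕ} (hr : 1 < r) : 0 < Real.sin (Real.pi / r) :=
  Real.sin_pos_of_pos_of_lt_pi (by positivity)
    (div_lt_self Real.pi_pos (by exact_mod_cast hr))

theorem neg_A_sq_ne_inv {r : ℕ} (hr : 1 < r) : -A r ^ 2 ≠ (-A r ^ 2)⁻¹ := by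
  rw [← sub_ne_zero, neg_A_sq_sub_inv, neg_ne_zero]
  exact mul_ne_zero (mul_ne_zero two_ne_zero Complex.I_ne_zero)
    (by exact_mod_cast (sin_pi_div_nat_pos hr).ne')

theorem neg_A_sq_sub_inv_pow_four (r : ℕ) :
    (-A r ^ 2 - (-A r ^ 2)⁻¹) ^ 4 = 16 * (Real.sin (Real.pi / r) : ℂ) ^ 4 := by
  rw [neg_A_sq_sub_inv, Even.neg_pow (by decide), mul_pow, mul_pow, Complex.I_pow_four]
  norm_num

/-- for r ≥ 3, the sum of `Δ_i Δ_j Δ_k` over all admissible triples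
`(i,j,k) ∈ I³` equals `r²/(4 sin⁴(π/r))` (the invariant `⟨·⟩_H` of the trivial genus-2
handlebody-knot computed from a theta-curve diagram). -/
theorem trivial_genus_two_invariant (r : ℕ) (hr : 3 ≤ r) :
    ∑ p ∈ (Finset.range (r - 1) ×ˢ Finset.range (r - 1) ×ˢ Finset.range (r - 1)).filter
        (fun p => Admissible r p.1 p.2.1 p.2.2),
      Δ r p.1 * Δ r p.2.1 * Δ r p.2.2 =
    (r : ℂ) ^ 2 / (4 * (Real.sin (Real.pi / r) : ℂ) ^ 4) := by
  simp only [Δ_eq_quantumInt, neg_A_sq_sub_inv_pow_four,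
    trivial_genus_two_invariant_general (neg_A_sq_ne_inv (by lia : 1 < r))
      (neg_A_sq_pow_two_mul (by lia))]
  ring
end
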